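/- arXiv:hep-th/9608089 — 2 statements merged into one kernel-verified Lean document; each statement's English description precedes it below -/
import Mathlib

section
/- Let γ₁ = [[i,0],[0,−i]] ∈ SL(2,ℤ[i]). A matrix M ∈ SL(2,ℤ[i]) satisfies M·γ₁·M⁻¹ = γ₁ or M·γ₁·M⁻¹ = −γ₁ if and only if M belongs to the eight-element set {±Id, ±γ₁, ±[[0,1],[−1,0]], ±[[0,i],[i,0]]}. (Equivalently, the centralizer of γ₁ in SL(2,ℤ[i])/{±Id} is the four-element group with representatives Id, γ₁, [[0,1],[−1,0]], [[0,i],[i,0]].) -/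
/-!
Write `M = [[a, b], [c, d]]`. Since `γ₁ = i • diag(1, -1)`, the relation `M γ₁ = γ₁ M` forces the
off-diagonal entries to vanish, so that `a d = 1`, while `M γ₁ = -γ₁ M` forces the diagonal entries
to vanish, so that `b (-c) = 1` (`conj_eq_iff`, `conj_eq_neg_iff`). In both cases the remaining
entries are mutually inverse units of `ℤ[i]`, i.e. one of the four pairs of powers of `i`
(`mul_eq_one_cases`).
-/

/-- `SL(2, ℤ[i])`, the special linear group over the Gaussian integers. -/
abbrev SL2Zi : Type := Matrix.SpecialLinearGroup (Fin 2) GaussianInt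

/-- The imaginary unit `i` in the Gaussian integers `ℤ[i]`. -/
def gi : GaussianInt := ⟨0, 1⟩

/-- Build an element of `SL(2, ℤ[i])` from its four entries and a determinant condition. -/
def Mk (a b c d : GaussianInt) (h : a * d - b * c = 1) : SL2Zi :=
  ⟨!![a, b; c, d], by simpa [Matrix.det_fin_two_of] using h⟩

/-- `γ₁ = [[i, 0], [0, -i]]` in `SL(2, ℤ[i])`. -/
def γ₁ : SL2Zi := Mk gi 0 0 (-gi) (by decide)

/-- `[[0, 1], [-1, 0]]` in `SL(2, ℤ[i])`. -/
def W₁ : SL2Zi := Mk 0 1 (-1) 0 (by decide)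

/-- `[[0, i], [i, 0]]` in `SL(2, ℤ[i])`. -/
def W₂ : SL2Zi := Mk 0 gi gi 0 (by decide)

/-- The units of `ℤ[i]` are `±1, ±i`, listed here with their inverses. -/
lemma mul_eq_one_cases {x y : GaussianInt} (h : x * y = 1) :
    (x = 1 ∧ y = 1) ∨ (x = -1 ∧ y = -1) ∨ (x = gi ∧ y = -gi) ∨ (x = -gi ∧ y = gi) := by
  have hx : x.norm = 1 :=
    (Zsqrtd.norm_eq_one_iff' (by norm_num) x).2 (IsUnit.of_mul_eq_one y h)
  obtain ⟨p, q⟩ := x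
  obtain ⟨r, s⟩ := y
  simp only [Zsqrtd.norm_def] at hx
  simp only [Zsqrtd.ext_iff, Zsqrtd.re_mul, Zsqrtd.im_mul, Zsqrtd.re_one, Zsqrtd.im_one] at h
  -- The norm equation `p² + q² = 1` bounds both coordinates of `x` by `1` in absolute value.
  have hp1 : p ≤ 1 := by nlinarith [sq_nonneg p, sq_nonneg q]
  have hp2 : -1 ≤ p := by nlinarith [sq_nonneg p, sq_nonneg q]
  have hq1 : q ≤ 1 := by nlinarith [sq_nonneg p, sq_nonneg q]
  have hq2 : -1 ≤ q := by nlinarith [sq_nonneg p, sq_nonneg q]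
  simp only [Zsqrtd.ext_iff, gi, Zsqrtd.re_neg, Zsqrtd.im_neg, Zsqrtd.re_one, Zsqrtd.im_one]
  interval_cases p <;> interval_cases q <;> omega

lemma sl_ext_iff {M N : SL2Zi} :
    M = N ↔ (M : Matrix (Fin 2) (Fin 2) GaussianInt) = (N : Matrix (Fin 2) (Fin 2) GaussianInt) :=
  Subtype.ext_iff

lemma coe_γ₁ : (γ₁ : Matrix (Fin 2) (Fin 2) GaussianInt) = !![gi, 0; 0, -gi] := rfl

lemma coe_W₁ : (W₁ : Matrix (Fin 2) (Fin 2) GaussianInt) = !![0, 1; -1, 0] := rfl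

lemma coe_W₂ : (W₂ : Matrix (Fin 2) (Fin 2) GaussianInt) = !![0, gi; gi, 0] := rfl

lemma gi_ne_zero : gi ≠ 0 := by decide

lemma eq_zero_of_gi_mul {x : GaussianInt} (h : gi * x = -(gi * x)) : x = 0 := by
  have h2 : gi * x = 0 := self_eq_neg.1 h
  exact (mul_eq_zero.1 h2).resolve_left gi_ne_zero

/-- `M` commutes with `γ₁` exactly when `M` is diagonal. -/
lemma conj_eq_iff (M : SL2Zi) : M * γ₁ * M⁻¹ = γ₁ ↔ M.1 0 1 = 0 ∧ M.1 1 0 = 0 := by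
  rw [mul_inv_eq_iff_eq_mul, sl_ext_iff, ← Matrix.ext_iff]
  simp only [coe_γ₁, Matrix.SpecialLinearGroup.coe_mul, Fin.forall_fin_two, Matrix.mul_apply,
    Fin.sum_univ_two]
  simp
  constructor
  · rintro ⟨⟨-, h1⟩, h2, -⟩
    exact ⟨eq_zero_of_gi_mul (by linear_combination -h1),
      eq_zero_of_gi_mul (by linear_combination h2)⟩
  · rintro ⟨h1, h2⟩
    simp [h1, h2, mul_comm]

/-- `M` anticommutes with `γ₁` exactly when `M` is antidiagonal. -/
lemma conj_eq_neg_iff (M : SL2Zi) :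
    (↑(M * γ₁ * M⁻¹) : Matrix (Fin 2) (Fin 2) GaussianInt)
        = -(↑γ₁ : Matrix (Fin 2) (Fin 2) GaussianInt) ↔ M.1 0 0 = 0 ∧ M.1 1 1 = 0 := by
  rw [← Matrix.SpecialLinearGroup.coe_neg, ← sl_ext_iff, mul_inv_eq_iff_eq_mul,
    sl_ext_iff, ← Matrix.ext_iff]
  simp only [coe_γ₁, Matrix.SpecialLinearGroup.coe_mul, Matrix.SpecialLinearGroup.coe_neg,
    Fin.forall_fin_two, Matrix.mul_apply, Fin.sum_univ_two]
  simp
  constructor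
  · rintro ⟨⟨h1, -⟩, -, h2⟩
    exact ⟨eq_zero_of_gi_mul (by linear_combination h1),
      eq_zero_of_gi_mul (by linear_combination -h2)⟩
  · rintro ⟨h1, h2⟩
    simp [h1, h2, mul_comm]

/-- A matrix `M ∈ SL(2,ℤ[i])` satisfies `Mγ₁M⁻¹ = ±γ₁` for
`γ₁ = [[i,0],[0,-i]]` if and only if `M` is one of the eight elements
`±Id, ±γ₁, ±[[0,1],[-1,0]], ±[[0,i],[i,0]]`; i.e. the centralizer of `γ₁` in
`SL(2,ℤ[i])/{±Id}` is the four-element group `{Id, γ₁, [[0,1],[-1,0]], [[0,i],[i,0]]}`. -/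
theorem statement3 (M : SL2Zi) :
    (M * γ₁ * M⁻¹ = γ₁ ∨
      (↑(M * γ₁ * M⁻¹) : Matrix (Fin 2) (Fin 2) GaussianInt)
        = -(↑γ₁ : Matrix (Fin 2) (Fin 2) GaussianInt)) ↔
    (M = 1 ∨ (↑M : Matrix (Fin 2) (Fin 2) GaussianInt) = -(1 : Matrix (Fin 2) (Fin 2) GaussianInt) ∨
     M = γ₁ ∨ (↑M : Matrix (Fin 2) (Fin 2) GaussianInt) = -(↑γ₁ : Matrix (Fin 2) (Fin 2) GaussianInt) ∨
     M = W₁ ∨ (↑M : Matrix (Fin 2) (Fin 2) GaussianInt) = -(↑W₁ : Matrix (Fin 2) (Fin 2) GaussianInt) ∨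
     M = W₂ ∨ (↑M : Matrix (Fin 2) (Fin 2) GaussianInt) = -(↑W₂ : Matrix (Fin 2) (Fin 2) GaussianInt)) := by
  rw [conj_eq_iff, conj_eq_neg_iff]
  have hdet : M.1 0 0 * M.1 1 1 - M.1 0 1 * M.1 1 0 = 1 := by
    rw [← Matrix.det_fin_two]; exact M.2
  simp only [sl_ext_iff, ← Matrix.ext_iff, Fin.forall_fin_two, coe_γ₁, coe_W₁, coe_W₂]
  simp
  constructor
  · rintro (⟨h1, h2⟩ | ⟨h1, h2⟩)
    · rw [h1, zero_mul, sub_zero] at hdet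
      rcases mul_eq_one_cases hdet with ⟨h3, h4⟩ | ⟨h3, h4⟩ | ⟨h3, h4⟩ | ⟨h3, h4⟩ <;>
        simp [h1, h2, h3, h4]
    · have hbc : M.1 0 1 * -M.1 1 0 = 1 := by
        rw [h1, zero_mul] at hdet
        linear_combination hdet
      rcases mul_eq_one_cases hbc with ⟨h3, h4⟩ | ⟨h3, h4⟩ | ⟨h3, h4⟩ | ⟨h3, h4⟩ <;>
        rw [neg_eq_iff_eq_neg] at h4 <;> simp [h1, h2, h3, h4]
  · tauto
end

section
/- The parabolic contribution to the heat-kernel trace carries a logarithmic term in its small-time asymptotics: lim_{t→0⁺} [ −(√t/(4π)) · ∫_{−∞}^{∞} e^{−t r²} ψ(1 + ir/2) dr − (ln t)/(8√π) ] = (ln 2 + γ_E/4)/(2√π), where γ_E is the Euler–Mascheroni constant. Equivalently, −(1/(4π)) ∫_{−∞}^{∞} e^{−t r²} ψ(1 + ir/2) dr = (ln t)/(8√(πt)) + (ln 2 + γ_E/4)/√(4πt) + o(t^{−1/2}) as t → 0⁺. -/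
/-!
Write `ψ` for the digamma function and put `c = √t`. Substituting `r = u/c` gives
`√t ∫ e^{-tr²} ψ(1 + ir/2) dr = ∫ e^{-u²} ψ(1 + iu/(2c)) du`. Since `ψ(s) ~ log s` at the ends of
the line `re s = 1`, the integrand is `e^{-u²} (log (c + iu/2) - log c)` plus an error that tends
to `0`. The term `-log c` integrates to `-√π (log t)/2`, which is the logarithmic term of the
expansion, and dominated convergence turns the rest into `∫ e^{-u²} log (iu/2) du`. The imaginary
part of this integrand is odd, while the real part is evaluated from
`∫ e^{-u²} log |u| du = Γ'(1/2)/2 = -√π (γ + 2 log 2)/2`.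

The asymptotics of `ψ` come with a uniform bound from the exact formula
`ψ(s) = log s - ∑ₖ (1/(s+k) - log (s+k+1) + log (s+k))` (`digamma_eq_log_sub_defectSum`), whose
terms are at most `1/‖s+k‖²`. Both sides satisfy `f(s+1) = f(s) + 1/s`, so on the positive reals
their difference is periodic; it tends to `0` at infinity by log-convexity of `Γ`, hence vanishes
there, and the identity theorem extends the formula to complex `s`.
-/

open MeasureTheory Filter

/-- The digamma function `ψ(s) = Γ'(s)/Γ(s)`, the logarithmic derivative of the complex
Gamma function. -/
noncomputable def digamma (s : ℂ) : ℂ := deriv Complex.Gamma s / Complex.Gamma s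

/-! ### The digamma function as a logarithm minus a convergent series -/

/-- The failure `1/s - log (s + 1) + log s` of the principal logarithm to satisfy the functional
equation `ψ(s + 1) - ψ(s) = 1/s` of the digamma function. -/
noncomputable def stepDefect (s : ℂ) : ℂ := 1 / s - Complex.log (s + 1) + Complex.log s

/-- The defect is the integral over `u ∈ [0, 1]` of `1/s - 1/(s + u) = u/(s (s + u))`, whose norm
is at most `‖s‖⁻²`; the bound is obtained as a mean value inequality. -/
lemma norm_stepDefect_le {s : ℂ} (hs : 0 < s.re) : ‖stepDefect s‖ ≤ 1 / ‖s‖ ^ 2 := by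
  have hs0 : s ≠ 0 := by rintro rfl; simp at hs
  have hsn : 0 < ‖s‖ := norm_pos_iff.2 hs0
  have hder : ∀ u ∈ Set.Icc (0 : ℝ) 1,
      HasDerivWithinAt (fun u : ℝ => (u : ℂ) / s - Complex.log (s + u))
        (1 / s - 1 / (s + u)) (Set.Icc 0 1) u := by
    intro u hu
    have h1 : HasDerivAt (fun u : ℝ => (u : ℂ)) 1 u := Complex.ofRealCLM.hasDerivAt
    have hsl : s + u ∈ Complex.slitPlane := by
      left; simp only [Complex.add_re, Complex.ofReal_re]; linarith [hu.1]
    exact ((h1.div_const s).sub ((h1.const_add s).clog_real hsl)).hasDerivWithinAt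
  have hbd : ∀ u ∈ Set.Ico (0 : ℝ) 1, ‖1 / s - 1 / (s + u)‖ ≤ 1 / ‖s‖ ^ 2 := by
    intro u hu
    have hle : ‖s‖ ≤ ‖s + u‖ := by
      rw [Complex.norm_eq_sqrt_sq_add_sq, Complex.norm_eq_sqrt_sq_add_sq]
      apply Real.sqrt_le_sqrt
      simp only [Complex.add_re, Complex.ofReal_re, Complex.add_im, Complex.ofReal_im, add_zero]
      nlinarith [hu.1]
    have hsu : s + u ≠ 0 := norm_pos_iff.1 (hsn.trans_le hle)
    have he : 1 / s - 1 / (s + u) = u / (s * (s + u)) := by field_simp; ring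
    rw [he, norm_div, norm_mul, Complex.norm_real, Real.norm_of_nonneg hu.1, sq]
    gcongr
    exact hu.2.le
  have := norm_image_sub_le_of_norm_deriv_le_segment_01' hder hbd
  simpa [stepDefect, sub_add] using this

lemma differentiableAt_stepDefect {s : ℂ} (hs : 0 < s.re) : DifferentiableAt ℂ stepDefect s := by
  have hs0 : s ≠ 0 := by rintro rfl; simp at hs
  have h1 : s + 1 ∈ Complex.slitPlane := by left; simp; linarith
  have h2 : s ∈ Complex.slitPlane := Or.inl hs
  unfold stepDefect
  exact (((differentiableAt_const _).div differentiableAt_id hs0).sub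
    ((differentiableAt_id.add_const _).clog h1)).add (differentiableAt_id.clog h2)

/-- The series `∑ₖ stepDefect (s + k)`, which converges for `0 < re s` and equals `log s - ψ(s)`
there. It is used only on the half-plane `1/2 < re s`, where the convergence is uniform. -/
noncomputable def defectSum (s : ℂ) : ℂ := ∑' k : ℕ, stepDefect (s + k)

lemma norm_stepDefect_add_le {s : ℂ} (hs : 1 / 2 < s.re) (k : ℕ) :
    ‖stepDefect (s + k)‖ ≤ 1 / |(k : ℝ) + 1 / 2| ^ (2 : ℝ) := by
  have hk : (0 : ℝ) ≤ k := k.cast_nonneg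
  have hre : (s + k).re = s.re + k := by simp
  refine (norm_stepDefect_le (by rw [hre]; linarith)).trans ?_
  have h1 : |(k : ℝ) + 1 / 2| ≤ ‖s + k‖ := by
    rw [abs_of_pos (by linarith)]
    refine le_trans ?_ (Complex.re_le_norm _)
    rw [hre]; linarith
  have h2 : 0 < |(k : ℝ) + 1 / 2| := abs_pos.2 (by linarith)
  rw [Real.rpow_two]
  gcongr

lemma summable_defectBound : Summable fun k : ℕ => 1 / |(k : ℝ) + 1 / 2| ^ (2 : ℝ) :=
  (Real.summable_one_div_nat_add_rpow _ _).2 (by norm_num)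

lemma summable_stepDefect {s : ℂ} (hs : 1 / 2 < s.re) :
    Summable fun k : ℕ => stepDefect (s + k) :=
  .of_norm_bounded summable_defectBound (norm_stepDefect_add_le hs)

lemma half_lt_re_vertical (y : ℝ) : 1 / 2 < (1 + Complex.I * (y : ℂ)).re := by
  have : (1 + Complex.I * (y : ℂ)).re = 1 := by simp
  rw [this]; norm_num

lemma isOpen_halfPlane : IsOpen {s : ℂ | 1 / 2 < s.re} :=
  isOpen_lt continuous_const Complex.continuous_re

lemma differentiableOn_defectSum : DifferentiableOn ℂ defectSum {s : ℂ | 1 / 2 < s.re} := by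
  refine Complex.differentiableOn_tsum_of_summable_norm summable_defectBound (fun k s hs => ?_)
    isOpen_halfPlane (fun k s hs => norm_stepDefect_add_le hs k)
  have hs' : 1 / 2 < s.re := hs
  have hk : (0 : ℝ) ≤ k := k.cast_nonneg
  have h : DifferentiableAt ℂ stepDefect (s + k) :=
    differentiableAt_stepDefect (by simp; linarith)
  exact (h.comp s (differentiableAt_id.add_const _)).differentiableWithinAt

lemma norm_defectSum_le {s : ℂ} (hs : 1 / 2 < s.re) :
    ‖defectSum s‖ ≤ ∑' k : ℕ, 1 / |(k : ℝ) + 1 / 2| ^ (2 : ℝ) :=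
  tsum_of_norm_bounded summable_defectBound.hasSum (norm_stepDefect_add_le hs)

lemma defectSum_add_one {s : ℂ} (hs : 1 / 2 < s.re) :
    defectSum (s + 1) = defectSum s - stepDefect s := by
  unfold defectSum
  rw [(summable_stepDefect hs).tsum_eq_zero_add]
  simp only [Nat.cast_zero, add_zero, add_sub_cancel_left, Nat.cast_succ]
  exact tsum_congr fun k => by rw [add_assoc, add_comm 1 (k : ℂ)]

/-- The defect series vanishes at the two ends of the line `re s = 1`: each term is at most `1/y²`
at `1 + iy`, and the series is dominated uniformly in `y`. -/
lemma tendsto_defectSum_vertical {ι : Type*} {l : Filter ι} {y : ι → ℝ}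
    (hy : Tendsto (fun i => |y i|) l atTop) :
    Tendsto (fun i => defectSum (1 + Complex.I * y i)) l (nhds 0) := by
  have h := tendsto_tsum_of_dominated_convergence (𝓕 := l)
    (f := fun i (k : ℕ) => stepDefect (1 + Complex.I * y i + k)) (g := fun _ => 0)
    summable_defectBound ?_ (Eventually.of_forall fun i k => norm_stepDefect_add_le (half_lt_re_vertical _) k)
  · simpa [defectSum] using h
  intro k
  have hk : (0 : ℝ) ≤ k := k.cast_nonneg
  have hlim : Tendsto (fun i => 1 / |y i| ^ 2) l (nhds 0) := by
    simpa [Function.comp_def] using (tendsto_inv_atTop_zero.comp ((tendsto_pow_atTop two_ne_zero).comp hy))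
  refine squeeze_zero_norm' ?_ hlim
  filter_upwards [hy.eventually_gt_atTop 0] with i hi
  refine (norm_stepDefect_le (by simp; linarith)).trans ?_
  have : |y i| ≤ ‖1 + Complex.I * y i + k‖ := by
    refine le_trans (le_of_eq ?_) (Complex.abs_im_le_norm _)
    simp
  gcongr

lemma tendsto_defectSum_add_nat {s : ℂ} :
    Tendsto (fun n : ℕ => defectSum (s + n)) atTop (nhds 0) := by
  have h := tendsto_sum_nat_add (fun k : ℕ => stepDefect (s + k))
  refine h.congr fun n => ?_
  unfold defectSum
  congr 1; ext k; push_cast; congr 1; ring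

lemma digamma_add_one {s : ℂ} (hs : 0 < s.re) : digamma (s + 1) = digamma s + 1 / s := by
  have hs0 : s ≠ 0 := by rintro rfl; simp at hs
  have hG := Complex.Gamma_ne_zero_of_re_pos hs
  unfold digamma
  rw [Complex.deriv_Gamma_add_one s hs0, Complex.Gamma_add_one s hs0]
  field_simp
  ring

lemma differentiableAt_Gamma_of_re_pos {s : ℂ} (hs : 0 < s.re) :
    DifferentiableAt ℂ Complex.Gamma s := by
  refine Complex.differentiableAt_Gamma s fun m h => ?_
  have hm : (0 : ℝ) ≤ m := m.cast_nonneg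
  rw [h] at hs; simp at hs; linarith

lemma differentiableOn_digamma : DifferentiableOn ℂ digamma {s : ℂ | 1 / 2 < s.re} := by
  have hpos : ∀ s ∈ {s : ℂ | 1 / 2 < s.re}, 0 < s.re := fun s hs => by
    have : 1 / 2 < s.re := hs
    linarith
  have hG : DifferentiableOn ℂ Complex.Gamma {s : ℂ | 1 / 2 < s.re} := fun s hs =>
    (differentiableAt_Gamma_of_re_pos (hpos s hs)).differentiableWithinAt
  exact (hG.deriv isOpen_halfPlane).div hG fun s hs => Complex.Gamma_ne_zero_of_re_pos (hpos s hs)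

lemma digamma_ofReal {x : ℝ} (hx : 0 < x) :
    digamma x = ((deriv (Real.log ∘ Real.Gamma) x : ℝ) : ℂ) := by
  have hd : DifferentiableAt ℝ Real.Gamma x :=
    Real.differentiableAt_Gamma fun m => ((neg_nonpos.mpr m.cast_nonneg).trans_lt hx).ne'
  have hG := Real.Gamma_pos_of_pos hx
  have h1 : HasDerivAt (fun y : ℝ => Complex.Gamma y) (deriv Complex.Gamma x) x :=
    (differentiableAt_Gamma_of_re_pos (by simpa using hx)).hasDerivAt.comp_ofReal
  have h2 : HasDerivAt (fun y : ℝ => Complex.Gamma y) ((deriv Real.Gamma x : ℝ) : ℂ) x := by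
    simp_rw [Complex.Gamma_ofReal]
    exact hd.hasDerivAt.ofReal_comp
  rw [digamma, h1.unique h2, Complex.Gamma_ofReal, Function.comp_def, deriv.log hd hG.ne']
  push_cast; rfl

/-- For real `x`, log-convexity of `Γ` places `ψ(x)` between the slopes of `log Γ` on `[x - 1, x]`
and on `[x, x + 1]`. -/
lemma log_sub_one_le_deriv_logGamma {x : ℝ} (hx : 1 < x) :
    Real.log (x - 1) ≤ deriv (Real.log ∘ Real.Gamma) x ∧
      deriv (Real.log ∘ Real.Gamma) x ≤ Real.log x := by
  have hc := Real.convexOn_log_Gamma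
  have h_rec (y : ℝ) (hy : 0 < y) :
      (Real.log ∘ Real.Gamma) (y + 1) = (Real.log ∘ Real.Gamma) y + Real.log y := by
    simp only [Function.comp_apply, Real.Gamma_add_one hy.ne',
      Real.log_mul hy.ne' (Real.Gamma_pos_of_pos hy).ne', add_comm]
  have hd : DifferentiableAt ℝ (Real.log ∘ Real.Gamma) x :=
    (Real.differentiableAt_Gamma fun m => ((neg_nonpos.mpr m.cast_nonneg).trans_lt
      (zero_lt_one.trans hx)).ne').log (Real.Gamma_pos_of_pos (by linarith)).ne'
  constructor
  · refine (le_of_eq ?_).trans <| hc.slope_le_deriv (x := x - 1) (Set.mem_Ioi.mpr (by linarith))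
      (Set.mem_Ioi.mpr (by linarith)) (by linarith) hd
    have := h_rec (x - 1) (by linarith)
    rw [sub_add_cancel] at this
    rw [slope_def_field, this]; ring
  · refine (hc.deriv_le_slope (y := x + 1) (Set.mem_Ioi.mpr (by linarith))
      (Set.mem_Ioi.mpr (by linarith)) (by linarith) hd).trans (le_of_eq ?_)
    rw [slope_def_field, h_rec x (by linarith)]; ring

lemma tendsto_digamma_sub_log_nat {x : ℝ} (hx : 1 / 2 < x) :
    Tendsto (fun n : ℕ => digamma ((x : ℂ) + n) - Complex.log ((x : ℂ) + n)) atTop (nhds 0) := by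
  have hlim : Tendsto (fun y : ℝ => Real.log (1 - 1 / y)) atTop (nhds 0) := by
    have h1 : Tendsto (fun y : ℝ => 1 - 1 / y) atTop (nhds 1) := by
      simpa using (tendsto_inv_atTop_zero (𝕜 := ℝ)).const_sub 1
    simpa using h1.log one_ne_zero
  have hsq : Tendsto (fun y : ℝ => deriv (Real.log ∘ Real.Gamma) y - Real.log y) atTop (nhds 0) := by
    refine tendsto_of_tendsto_of_tendsto_of_le_of_le' hlim tendsto_const_nhds ?_ ?_
    · filter_upwards [eventually_gt_atTop 1] with y hy
      have h0 : y ≠ 0 := by linarith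
      have : 1 - 1 / y = (y - 1) / y := by field_simp
      rw [this, Real.log_div (by linarith) h0]
      linarith [(log_sub_one_le_deriv_logGamma hy).1]
    · filter_upwards [eventually_gt_atTop 1] with y hy
      linarith [(log_sub_one_le_deriv_logGamma hy).2]
  have hn : Tendsto (fun n : ℕ => x + n) atTop atTop :=
    tendsto_atTop_add_const_left _ _ tendsto_natCast_atTop_atTop
  have h := (Complex.continuous_ofReal.tendsto 0).comp (hsq.comp hn)
  refine (h.congr fun n => ?_)
  have hp : 0 < x + n := by positivity
  have := digamma_ofReal hp
  push_cast at this
  simp only [Function.comp_apply, Complex.ofReal_sub, Complex.ofReal_log hp.le]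
  rw [this]; push_cast; rfl

/-- For real `x > 1/2`, the function `ψ - log + defectSum` has period `1` and tends to `0` at `+∞`, so it
vanishes. -/
lemma digamma_ofReal_eq {x : ℝ} (hx : 1 / 2 < x) :
    digamma x = Complex.log x - defectSum x := by
  have hper (n : ℕ) : digamma ((x : ℂ) + n) - Complex.log ((x : ℂ) + n) + defectSum ((x : ℂ) + n)
      = digamma x - Complex.log x + defectSum x := by
    induction n with
    | zero => simp
    | succ n ih =>
      have hre : 1 / 2 < ((x : ℂ) + n).re := by
        have : (0 : ℝ) ≤ n := n.cast_nonneg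
        simp only [Complex.add_re, Complex.ofReal_re, Complex.natCast_re]; linarith
      rw [← ih, Nat.cast_succ, ← add_assoc, digamma_add_one (by linarith), defectSum_add_one hre,
        stepDefect]
      ring
  have h := (tendsto_digamma_sub_log_nat hx).add (tendsto_defectSum_add_nat (s := x))
  simp_rw [hper] at h
  have := tendsto_nhds_unique h tendsto_const_nhds
  linear_combination -this

/-- The identity theorem extends the real identity to the half-plane `1/2 < re s`. -/
theorem digamma_eq_log_sub_defectSum {s : ℂ} (hs : 1 / 2 < s.re) :
    digamma s = Complex.log s - defectSum s := by
  have hlog : DifferentiableOn ℂ Complex.log {s : ℂ | 1 / 2 < s.re} := fun s hs =>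
    (Complex.differentiableAt_log (Or.inl (by
      have : 1 / 2 < s.re := hs
      linarith))).differentiableWithinAt
  refine AnalyticOnNhd.eqOn_of_preconnected_of_frequently_eq (z₀ := 1)
    (differentiableOn_digamma.analyticOnNhd isOpen_halfPlane)
    ((hlog.sub differentiableOn_defectSum).analyticOnNhd isOpen_halfPlane)
    (convex_halfSpace_re_gt _).isPreconnected (by norm_num) ?_ hs
  have ht : Tendsto (fun x : ℝ => (x : ℂ)) (nhdsWithin 1 {1}ᶜ) (nhdsWithin 1 {1}ᶜ) := by
    refine tendsto_nhdsWithin_iff.2 ⟨?_, ?_⟩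
    · exact (Complex.continuous_ofReal.tendsto' 1 1 (by simp)).mono_left nhdsWithin_le_nhds
    · filter_upwards [self_mem_nhdsWithin] with x hx
      simpa using hx
  refine ht.frequently (Eventually.frequently ?_)
  filter_upwards [nhdsWithin_le_nhds (lt_mem_nhds (show (1 / 2 : ℝ) < 1 by norm_num))] with x hx
  exact digamma_ofReal_eq hx

/-! ### Gaussian integrals of the logarithm -/

/-- The value of `Γ'(1/2)`, written as the differentiated Euler integral. -/
lemma integral_rpow_mul_log_mul_exp :
    ∫ x in Set.Ioi (0 : ℝ), x ^ (-(1 / 2) : ℝ) * (Real.log x * Real.exp (-x)) =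
      -√Real.pi * (Real.eulerMascheroniConstant + 2 * Real.log 2) := by
  have h1 := Complex.hasDerivAt_GammaIntegral (s := 1 / 2) (by norm_num)
  have h2 : HasDerivAt Complex.GammaIntegral
      (-√Real.pi * (Real.eulerMascheroniConstant + 2 * Complex.log 2)) (1 / 2) := by
    refine Complex.hasDerivAt_Gamma_one_half.congr_of_eventuallyEq ?_
    have ho : IsOpen {s : ℂ | 0 < s.re} := isOpen_lt continuous_const Complex.continuous_re
    filter_upwards [ho.mem_nhds (show (1 / 2 : ℂ) ∈ {s : ℂ | 0 < s.re} by norm_num)] with s hs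
    exact (Complex.Gamma_eq_integral hs).symm
  have h3 := h1.unique h2
  apply Complex.ofReal_injective
  rw [← integral_complex_ofReal]
  have : (((-√Real.pi * (Real.eulerMascheroniConstant + 2 * Real.log 2) : ℝ)) : ℂ) =
      -√Real.pi * (Real.eulerMascheroniConstant + 2 * Complex.log 2) := by
    push_cast; simp
  rw [this, ← h3]
  refine setIntegral_congr_fun measurableSet_Ioi fun x hx => ?_
  have hx0 : 0 ≤ x := le_of_lt hx
  simp only [Complex.ofReal_mul, Complex.ofReal_cpow hx0]
  congr 2
  push_cast; norm_num

/-- The substitution `x ↦ x ^ 2` in the integral for `Γ'(1/2)`. -/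
lemma integral_Ioi_exp_neg_sq_mul_log :
    ∫ x in Set.Ioi (0 : ℝ), Real.exp (-x ^ 2) * Real.log x =
      -√Real.pi * (Real.eulerMascheroniConstant + 2 * Real.log 2) / 4 := by
  have h := integral_comp_rpow_Ioi_of_pos
    (g := fun x : ℝ => x ^ (-(1 / 2) : ℝ) * (Real.log x * Real.exp (-x))) (p := 2) two_pos
  rw [integral_rpow_mul_log_mul_exp] at h
  rw [eq_div_iff (by norm_num), ← h, ← integral_mul_const]
  refine setIntegral_congr_fun measurableSet_Ioi fun x hx => ?_
  have hx0 : 0 < x := hx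
  have e1 : (x ^ (2 : ℝ)) ^ (-(1 / 2) : ℝ) = x⁻¹ := by
    rw [← Real.rpow_mul hx0.le, show (2 : ℝ) * (-(1 / 2)) = -1 by norm_num, Real.rpow_neg_one]
  have e2 : x ^ ((2 : ℝ) - 1) = x := by norm_num
  simp only [smul_eq_mul]
  rw [e1, e2, Real.rpow_two, Real.log_pow]
  push_cast
  field_simp
  ring

lemma integral_exp_neg_sq_mul_log :
    ∫ x : ℝ, Real.exp (-x ^ 2) * Real.log x =
      -√Real.pi * (Real.eulerMascheroniConstant + 2 * Real.log 2) / 2 := by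
  have h := integral_comp_abs (f := fun x => Real.exp (-x ^ 2) * Real.log x)
  simp only [sq_abs, Real.log_abs] at h
  rw [h, integral_Ioi_exp_neg_sq_mul_log]; ring

/-- The Bochner integral of a non-integrable function is `0`, so integrability follows from the
nonvanishing of the value already computed. -/
lemma integrable_exp_neg_sq_mul_log :
    Integrable fun x : ℝ => Real.exp (-x ^ 2) * Real.log x := by
  by_contra h
  have h0 := integral_exp_neg_sq_mul_log
  rw [integral_undef h] at h0
  have h1 : 0 < √Real.pi := Real.sqrt_pos.2 Real.pi_pos
  have h2 : 0 < Real.log 2 := Real.log_pos one_lt_two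
  have h3 := Real.one_half_lt_eulerMascheroniConstant
  have : 0 < √Real.pi * (Real.eulerMascheroniConstant + 2 * Real.log 2) := by positivity
  linarith

lemma integrable_exp_neg_sq : Integrable fun x : ℝ => Real.exp (-x ^ 2) := by
  simpa using integrable_exp_neg_mul_sq (b := 1) one_pos

lemma integral_exp_neg_sq : ∫ x : ℝ, Real.exp (-x ^ 2) = √Real.pi := by
  simpa using integral_gaussian 1

/-- The integrable majorant `e^{-x²} (|log |x|| + |x| + K)` (recall that `Real.log x` is
`log |x|`). -/
noncomputable def gaussBound (K x : ℝ) : ℝ :=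
  Real.exp (-x ^ 2) * (|Real.log x| + |x| + K)

lemma integrable_gaussBound (K : ℝ) : Integrable (gaussBound K) := by
  have h1 := integrable_exp_neg_sq_mul_log.norm
  have h2 : Integrable fun x : ℝ => Real.exp (-x ^ 2) * x := by
    simpa [mul_comm] using integrable_mul_exp_neg_mul_sq (b := 1) one_pos
  have h3 := integrable_exp_neg_sq.mul_const K
  refine ((h1.add h2.norm).add h3).congr (Eventually.of_forall fun x => ?_)
  simp only [Pi.add_apply, norm_mul, Real.norm_eq_abs, Real.abs_exp, gaussBound]
  ring

lemma norm_log_le_of_mem {c u : ℝ} (hc0 : 0 ≤ c) (hc1 : c ≤ 1) (hu : u ≠ 0) :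
    ‖Complex.log (c + Complex.I * u / 2)‖ ≤
      |Real.log u| + |u| + (Real.log 2 + 1 + Real.pi) := by
  set z : ℂ := c + Complex.I * u / 2
  have him : z.im = u / 2 := by simp [z]
  have hre : z.re = c := by simp [z]
  have hu' : 0 < |u| := abs_pos.2 hu
  have hlow : |u| / 2 ≤ ‖z‖ := by
    refine le_trans (le_of_eq ?_) (Complex.abs_im_le_norm z)
    rw [him, abs_div, abs_two]
  have hup : ‖z‖ ≤ 1 + |u| / 2 := by
    refine (Complex.norm_le_abs_re_add_abs_im z).trans ?_
    rw [him, hre, abs_div, abs_two, abs_of_nonneg hc0]; linarith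
  have hz : 0 < ‖z‖ := by linarith
  have h1 : Real.log ‖z‖ ≤ |u| / 2 := by linarith [Real.log_le_sub_one_of_pos hz]
  have h2 : Real.log u - Real.log 2 ≤ Real.log ‖z‖ := by
    rw [← Real.log_abs u, ← Real.log_div hu'.ne' two_ne_zero]
    exact Real.log_le_log (by positivity) hlow
  have h3 : |Real.log ‖z‖| ≤ |Real.log u| + |u| + Real.log 2 + 1 := by
    have := Real.log_pos one_lt_two
    rw [abs_le]
    constructor <;> linarith [neg_abs_le (Real.log u), abs_nonneg (Real.log u)]
  refine (Complex.norm_le_abs_re_add_abs_im _).trans ?_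
  rw [Complex.log_re, Complex.log_im]
  linarith [Complex.abs_arg_le_pi z]

/-! ### Rescaling and dominated convergence -/

/-- The integrand `e^{-u²} (ψ(1 + iu/(2c)) + log c)`, with the digamma function replaced by its
expression through the logarithm and the defect series. For `c = √t` this is the heat-kernel
integrand after the substitution `r = u/√t`, with its logarithmic divergence removed. -/
noncomputable def rescaled (c u : ℝ) : ℂ :=
  (Real.exp (-u ^ 2) : ℂ) *
    (Complex.log (c + Complex.I * u / 2) - defectSum (1 + Complex.I * ((u / (2 * c) : ℝ) : ℂ)))

/-- The limit of `rescaled c` as `c → 0⁺`, namely `e^{-u²} log (iu/2)`. -/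
noncomputable def limitIntegrand (u : ℝ) : ℂ :=
  (Real.exp (-u ^ 2) : ℂ) * Complex.log (Complex.I * u / 2)

lemma mem_slitPlane_of_ne {c u : ℝ} (h : 0 < c ∨ u ≠ 0) :
    (c : ℂ) + Complex.I * u / 2 ∈ Complex.slitPlane := by
  rcases h with h | h
  · left; simpa using h
  · right; simpa using h

lemma exists_norm_rescaled_le : ∃ K : ℝ, ∀ c : ℝ, 0 < c → c ≤ 1 → ∀ u : ℝ, u ≠ 0 →
    ‖rescaled c u‖ ≤ gaussBound K u := by
  refine ⟨Real.log 2 + 1 + Real.pi + ∑' k : ℕ, 1 / |(k : ℝ) + 1 / 2| ^ (2 : ℝ),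
    fun c hc hc1 u hu => ?_⟩
  rw [rescaled, gaussBound, norm_mul, Complex.norm_real, Real.norm_of_nonneg (Real.exp_pos _).le]
  gcongr
  refine (norm_sub_le _ _).trans ?_
  have h1 := norm_log_le_of_mem hc.le hc1 hu
  have h2 := norm_defectSum_le (s := 1 + Complex.I * ((u / (2 * c) : ℝ) : ℂ))
    (half_lt_re_vertical _)
  linarith

lemma continuous_rescaled {c : ℝ} (hc : 0 < c) : Continuous (rescaled c) := by
  have h1 : Continuous fun u : ℝ => Complex.log (c + Complex.I * u / 2) :=
    Continuous.clog (by fun_prop) fun u => mem_slitPlane_of_ne (.inl hc)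
  have h2 : Continuous fun u : ℝ => defectSum (1 + Complex.I * ((u / (2 * c) : ℝ) : ℂ)) :=
    differentiableOn_defectSum.continuousOn.comp_continuous (by fun_prop)
      fun u => half_lt_re_vertical _
  unfold rescaled
  exact (by fun_prop : Continuous fun u : ℝ => (Real.exp (-u ^ 2) : ℂ)).mul (h1.sub h2)

lemma tendsto_rescaled {u : ℝ} (hu : u ≠ 0) :
    Tendsto (fun c => rescaled c u) (nhdsWithin 0 (Set.Ioi 0)) (nhds (limitIntegrand u)) := by
  have h1 : Tendsto (fun c : ℝ => Complex.log (c + Complex.I * u / 2))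
      (nhdsWithin 0 (Set.Ioi 0)) (nhds (Complex.log (Complex.I * u / 2))) := by
    have hm := mem_slitPlane_of_ne (c := 0) (.inr hu)
    have hc : ContinuousAt (fun c : ℝ => Complex.log (c + Complex.I * u / 2)) 0 :=
      ContinuousAt.clog (by fun_prop) hm
    have := hc.tendsto.mono_left (nhdsWithin_le_nhds (s := Set.Ioi 0))
    simpa using this
  have h2 : Tendsto (fun c : ℝ => |u / (2 * c)|) (nhdsWithin 0 (Set.Ioi 0)) atTop := by
    have : Tendsto (fun c : ℝ => |u / 2| * c⁻¹) (nhdsWithin 0 (Set.Ioi 0)) atTop :=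
      tendsto_inv_nhdsGT_zero.const_mul_atTop (abs_pos.2 (by simpa using hu))
    refine this.congr' ?_
    filter_upwards [self_mem_nhdsWithin] with c hc
    have hc' : 0 < c := hc
    rw [← abs_of_pos (inv_pos.2 hc'), ← abs_mul]
    congr 1
    field_simp
  have h3 := (h1.sub (tendsto_defectSum_vertical h2)).const_mul ((Real.exp (-u ^ 2) : ℝ) : ℂ)
  rw [sub_zero] at h3
  exact h3

lemma ae_ne_zero : ∀ᵐ u : ℝ, u ≠ 0 := Measure.ae_ne volume 0

lemma integrable_rescaled {c : ℝ} (hc : 0 < c) (hc1 : c ≤ 1) : Integrable (rescaled c) := by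
  obtain ⟨K, hK⟩ := exists_norm_rescaled_le
  refine (integrable_gaussBound K).mono' (continuous_rescaled hc).aestronglyMeasurable ?_
  filter_upwards [ae_ne_zero] with u hu using hK c hc hc1 u hu

lemma tendsto_integral_rescaled :
    Tendsto (fun c => ∫ u, rescaled c u) (nhdsWithin 0 (Set.Ioi 0))
      (nhds (∫ u, limitIntegrand u)) := by
  obtain ⟨K, hK⟩ := exists_norm_rescaled_le
  have hc1 : ∀ᶠ c : ℝ in nhdsWithin 0 (Set.Ioi 0), c ≤ 1 :=
    nhdsWithin_le_nhds (Iic_mem_nhds one_pos)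
  refine tendsto_integral_filter_of_dominated_convergence (gaussBound K) ?_ ?_
    (integrable_gaussBound K) ?_
  · filter_upwards [self_mem_nhdsWithin] with c hc
    exact (continuous_rescaled hc).aestronglyMeasurable
  · filter_upwards [self_mem_nhdsWithin, hc1] with c hc hc1
    filter_upwards [ae_ne_zero] with u hu using hK c hc hc1 u hu
  · filter_upwards [ae_ne_zero] with u hu using tendsto_rescaled hu

/-- The imaginary part of `log (iu/2)` is odd in `u`, so symmetrization leaves only
`log ‖iu/2‖ = log |u| - log 2`. -/
lemma limitIntegrand_add_neg {u : ℝ} (hu : u ≠ 0) :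
    limitIntegrand u + limitIntegrand (-u) =
      ((2 * (Real.exp (-u ^ 2) * Real.log u) - 2 * Real.log 2 * Real.exp (-u ^ 2) : ℝ) : ℂ) := by
  have hconj : Complex.I * ((-u : ℝ) : ℂ) / 2 =
      (starRingEnd ℂ) (Complex.I * u / 2) := by
    rw [map_div₀, map_mul, Complex.conj_I, Complex.conj_ofReal, Complex.conj_ofNat]
    push_cast; ring
  have hm := mem_slitPlane_of_ne (c := 0) (.inr hu)
  rw [Complex.ofReal_zero, zero_add] at hm
  have harg : (Complex.I * (u : ℂ) / 2).arg ≠ Real.pi := (Complex.mem_slitPlane_iff_arg.1 hm).1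
  have hn : ‖Complex.I * (u : ℂ) / 2‖ = |u| / 2 := by simp
  rw [limitIntegrand, limitIntegrand, hconj, Complex.log_conj _ harg, neg_sq, ← mul_add,
    Complex.add_conj, Complex.log_re, hn,
    Real.log_div (abs_pos.2 hu).ne' two_ne_zero, Real.log_abs]
  push_cast
  ring

lemma integrable_limitIntegrand : Integrable limitIntegrand := by
  refine (integrable_gaussBound (Real.log 2 + 1 + Real.pi)).mono' ?_ ?_
  · unfold limitIntegrand
    exact Measurable.aestronglyMeasurable (by fun_prop)
  · filter_upwards [ae_ne_zero] with u hu
    have := norm_log_le_of_mem le_rfl zero_le_one hu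
    rw [Complex.ofReal_zero, zero_add] at this
    rw [limitIntegrand, gaussBound, norm_mul, Complex.norm_real,
      Real.norm_of_nonneg (Real.exp_pos _).le]
    gcongr

lemma integral_limitIntegrand :
    ∫ u, limitIntegrand u =
      ((-√Real.pi * (Real.eulerMascheroniConstant / 2 + 2 * Real.log 2) : ℝ) : ℂ) := by
  have h1 : ∫ u, limitIntegrand (-u) = ∫ u, limitIntegrand u :=
    integral_neg_eq_self limitIntegrand volume
  have h2 : ∫ u, (limitIntegrand u + limitIntegrand (-u)) =
      ((2 * (-√Real.pi * (Real.eulerMascheroniConstant + 2 * Real.log 2) / 2)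
        - 2 * Real.log 2 * √Real.pi : ℝ) : ℂ) := by
    rw [← integral_exp_neg_sq_mul_log, ← integral_exp_neg_sq, ← integral_const_mul,
      ← integral_const_mul, ← integral_sub (integrable_exp_neg_sq_mul_log.const_mul 2)
      (integrable_exp_neg_sq.const_mul _), ← integral_complex_ofReal]
    refine integral_congr_ae ?_
    filter_upwards [ae_ne_zero] with u hu using limitIntegrand_add_neg hu
  rw [integral_add integrable_limitIntegrand integrable_limitIntegrand.comp_neg, h1] at h2
  have h3 : ∫ u, limitIntegrand u = ((2 * (-√Real.pi * (Real.eulerMascheroniConstant + 2 * Real.log 2) / 2)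
        - 2 * Real.log 2 * √Real.pi : ℝ) : ℂ) / 2 := by rw [← h2]; ring
  rw [h3]; push_cast; ring

lemma gaussian_mul_digamma_eq {c : ℝ} (hc : 0 < c) (u : ℝ) :
    (Real.exp (-u ^ 2) : ℂ) * digamma (1 + Complex.I * ((u / c : ℝ) : ℂ) / 2) =
      rescaled c u - ((Real.exp (-u ^ 2) * Real.log c : ℝ) : ℂ) := by
  have hc' : (c : ℂ) ≠ 0 := by exact_mod_cast hc.ne'
  have harg : 1 + Complex.I * ((u / c : ℝ) : ℂ) / 2 =
      1 + Complex.I * ((u / (2 * c) : ℝ) : ℂ) := by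
    push_cast; field_simp
  have hne : (1 : ℂ) + Complex.I * ((u / (2 * c) : ℝ) : ℂ) ≠ 0 := by
    intro h
    have := half_lt_re_vertical (u / (2 * c))
    rw [h, Complex.zero_re] at this
    norm_num at this
  have hlog : Complex.log (c + Complex.I * u / 2) =
      Real.log c + Complex.log (1 + Complex.I * ((u / (2 * c) : ℝ) : ℂ)) := by
    rw [← Complex.log_ofReal_mul hc hne]
    congr 1
    push_cast; field_simp
  rw [harg, digamma_eq_log_sub_defectSum (half_lt_re_vertical _), rescaled, hlog]
  push_cast
  ring

lemma sqrt_mul_integral {c : ℝ} (hc : 0 < c) (hc1 : c ≤ 1) :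
    (c : ℂ) * (∫ r : ℝ, (Real.exp (-(c ^ 2 * r ^ 2)) : ℂ) * digamma (1 + Complex.I * (r : ℂ) / 2)) =
      (∫ u, rescaled c u) - ((√Real.pi * Real.log c : ℝ) : ℂ) := by
  have hc' : (c : ℂ) ≠ 0 := by exact_mod_cast hc.ne'
  have h := Measure.integral_comp_mul_left (fun u : ℝ =>
    (Real.exp (-u ^ 2) : ℂ) * digamma (1 + Complex.I * ((u / c : ℝ) : ℂ) / 2)) c
  have e : (fun r : ℝ => (Real.exp (-(c * r) ^ 2) : ℂ) *
      digamma (1 + Complex.I * ((c * r / c : ℝ) : ℂ) / 2)) =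
      fun r : ℝ => (Real.exp (-(c ^ 2 * r ^ 2)) : ℂ) * digamma (1 + Complex.I * (r : ℂ) / 2) := by
    ext r
    rw [mul_pow, mul_div_cancel_left₀ _ hc.ne']
  rw [e] at h
  rw [h, abs_of_pos (inv_pos.2 hc), Complex.real_smul, Complex.ofReal_inv,
    mul_inv_cancel_left₀ hc']
  simp_rw [gaussian_mul_digamma_eq hc]
  have hi : Integrable fun u : ℝ => ((Real.exp (-u ^ 2) * Real.log c : ℝ) : ℂ) :=
    (integrable_exp_neg_sq.mul_const (Real.log c)).ofReal
  rw [integral_sub (integrable_rescaled hc hc1) hi,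
    integral_complex_ofReal, integral_mul_const, integral_exp_neg_sq]

/-- The parabolic contribution to the heat-kernel trace carries a
logarithmic term in its small-time asymptotics:
`lim_{t→0⁺} [ -(√t/(4π)) ∫ e^{-tr²} ψ(1+ir/2) dr - (ln t)/(8√π) ]
  = (ln 2 + γ_E/4)/(2√π)`,
where `γ_E` is the Euler–Mascheroni constant; equivalently
`-(1/(4π)) ∫ e^{-tr²} ψ(1+ir/2) dr = (ln t)/(8√(πt)) + (ln 2 + γ_E/4)/√(4πt) + o(t^{-1/2})`
as `t → 0⁺`. -/
theorem statement13 :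
    Tendsto (fun t : ℝ =>
        -((Real.sqrt t / (4 * Real.pi) : ℝ) : ℂ) *
            (∫ r : ℝ, (Real.exp (-(t * r ^ 2)) : ℂ) * digamma (1 + Complex.I * (r : ℂ) / 2))
          - ((Real.log t / (8 * Real.sqrt Real.pi) : ℝ) : ℂ))
      (nhdsWithin 0 (Set.Ioi 0))
      (nhds (((Real.log 2 + Real.eulerMascheroniConstant / 4)
          / (2 * Real.sqrt Real.pi) : ℝ) : ℂ)) := by
  have hsqrt : Tendsto Real.sqrt (nhdsWithin 0 (Set.Ioi 0)) (nhdsWithin 0 (Set.Ioi 0)) := by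
    refine tendsto_nhdsWithin_iff.2 ⟨?_, ?_⟩
    · exact (Real.continuous_sqrt.tendsto' 0 0 Real.sqrt_zero).mono_left nhdsWithin_le_nhds
    · filter_upwards [self_mem_nhdsWithin] with t ht using Real.sqrt_pos.2 ht
  have hpi : 0 < √Real.pi := Real.sqrt_pos.2 Real.pi_pos
  have hpi2 : √Real.pi * √Real.pi = Real.pi := Real.mul_self_sqrt Real.pi_pos.le
  have h := (tendsto_integral_rescaled.comp hsqrt).const_mul ((-(1 / (4 * Real.pi)) : ℝ) : ℂ)
  have hval : ((-(1 / (4 * Real.pi)) : ℝ) : ℂ) * ∫ u, limitIntegrand u =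
      (((Real.log 2 + Real.eulerMascheroniConstant / 4) / (2 * Real.sqrt Real.pi) : ℝ) : ℂ) := by
    rw [integral_limitIntegrand, ← Complex.ofReal_mul]
    congr 1
    nth_rewrite 1 [← hpi2]
    field_simp
    ring
  rw [hval] at h
  refine h.congr' ?_
  filter_upwards [self_mem_nhdsWithin, nhdsWithin_le_nhds (Iic_mem_nhds one_pos)] with t ht ht1
  have ht0 : 0 < t := ht
  have hs := sqrt_mul_integral (Real.sqrt_pos.2 ht0) (Real.sqrt_le_one.2 ht1)
  rw [Real.sq_sqrt ht0.le, Real.log_sqrt ht0.le] at hs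
  have hc : Real.log t / (8 * √Real.pi) = 1 / (4 * Real.pi) * (√Real.pi * (Real.log t / 2)) := by
    nth_rewrite 2 [← hpi2]
    field_simp
    ring
  have hd : √t / (4 * Real.pi) = 1 / (4 * Real.pi) * √t := by ring
  rw [hc, hd, Complex.ofReal_mul (1 / (4 * Real.pi)) √t,
    Complex.ofReal_mul (1 / (4 * Real.pi)) (√Real.pi * (Real.log t / 2)), neg_mul, mul_assoc, hs]
  simp only [Function.comp_apply]
  push_cast
  ring
end
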